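/- Let a_1, a_2, b, c be real numbers with c > b > 0, and let x ∈ (0,1). Then sgn(D_c (F(a_1,b,c,x) / F(a_2,b,c,x))) = sgn(a_2 − a_1), where D_c denotes the derivative with respect to the parameter c of the ratio of the two hypergeometric functions. -/

import Mathlib

/-- The rising factorial (Pochhammer symbol): `(y)_j = y(y+1)⋯(y+j-1)`, `(y)_0 = 1`. -/
noncomputable def risingFactorial (y : ℝ) : ℕ → ℝ
  | 0 => 1
  | m + 1 => risingFactorial y m * (y + m)

/-- The Gaussian hypergeometric function
`F(a,b,c,x) = ∑_{j≥0} (a)_j (b)_j / ((c)_j j!) xʲ`. -/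
noncomputable def hypF (a b c x : ℝ) : ℝ :=
  ∑' j : ℕ, risingFactorial a j * risingFactorial b j /
    (risingFactorial c j * (Nat.factorial j : ℝ)) * x ^ j

/-!
By Euler's formula, `F(a, b, c, x)` is, up to a factor `B(b, c - b)` that cancels in the ratio, the
integral of `t ^ (b - 1) * (1 - x * t) ^ (-a) * (1 - t) ^ (c - b - 1)` over `(0, 1)`. Viewed as a
function of `c`, this is the moment generating function of `log (1 - t)` at `c - b - 1`, so
differentiating in `c` inserts the factor `log (1 - t)`. The numerator of the derivative of the
ratio is then a difference of products of integrals to which Chebyshev's integral inequality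
applies: `log (1 - t)` is decreasing, while the ratio `(1 - x * t) ^ (a₂ - a₁)` of the two
integrands is increasing or decreasing according to the sign of `x * (a₁ - a₂)`.
-/

open MeasureTheory ProbabilityTheory Set

section ChebyshevIntegral

variable {α : Type*} [MeasurableSpace α] {μ : Measure α} {p q g : α → ℝ}

lemma integrable_prod_minor_mul_sub (hp : Integrable p μ) (hq : Integrable q μ)
    (hgp : Integrable (fun t ↦ g t * p t) μ) (hgq : Integrable (fun t ↦ g t * q t) μ) :
    Integrable (fun z : α × α ↦ (p z.2 * q z.1 - p z.1 * q z.2) * (g z.1 - g z.2)) (μ.prod μ) := by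
  refine (((hgq.mul_prod hp).sub (hgp.mul_prod hq)).add
    ((hp.mul_prod hgq).sub (hq.mul_prod hgp))).congr (.of_forall fun z ↦ ?_)
  simp only [Pi.add_apply, Pi.sub_apply]
  ring

lemma integral_prod_minor_mul_sub [SFinite μ] (hp : Integrable p μ) (hq : Integrable q μ)
    (hgp : Integrable (fun t ↦ g t * p t) μ) (hgq : Integrable (fun t ↦ g t * q t) μ) :
    ∫ z : α × α, (p z.2 * q z.1 - p z.1 * q z.2) * (g z.1 - g z.2) ∂μ.prod μ =
      2 * ((∫ t, p t ∂μ) * (∫ t, g t * q t ∂μ) - (∫ t, g t * p t ∂μ) * ∫ t, q t ∂μ) := by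
  have hfst : Integrable (fun z : α × α ↦ g z.1 * q z.1 * p z.2 - g z.1 * p z.1 * q z.2)
      (μ.prod μ) := (hgq.mul_prod hp).sub (hgp.mul_prod hq)
  have hsnd : Integrable (fun z : α × α ↦ p z.1 * (g z.2 * q z.2) - q z.1 * (g z.2 * p z.2))
      (μ.prod μ) := (hp.mul_prod hgq).sub (hq.mul_prod hgp)
  calc ∫ z : α × α, (p z.2 * q z.1 - p z.1 * q z.2) * (g z.1 - g z.2) ∂μ.prod μ
    _ = ∫ z : α × α, (g z.1 * q z.1 * p z.2 - g z.1 * p z.1 * q z.2) +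
          (p z.1 * (g z.2 * q z.2) - q z.1 * (g z.2 * p z.2)) ∂μ.prod μ := by
      congr with z
      ring
    _ = ((∫ t, g t * q t ∂μ) * (∫ t, p t ∂μ) - (∫ t, g t * p t ∂μ) * ∫ t, q t ∂μ) +
          ((∫ t, p t ∂μ) * (∫ t, g t * q t ∂μ) - (∫ t, q t ∂μ) * ∫ t, g t * p t ∂μ) := by
      rw [integral_add hfst hsnd, integral_sub (hgq.mul_prod hp) (hgp.mul_prod hq),
        integral_sub (hp.mul_prod hgq) (hq.mul_prod hgp)]
      simp only [← integral_prod_mul]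
    _ = _ := by ring

/-- Chebyshev's integral inequality in strict weighted form: the integrand of
`integral_prod_minor_mul_sub` is positive off the diagonal. -/
theorem integral_mul_mul_integral_lt_of_strictAntiOn [LinearOrder α] [SFinite μ]
    [NullSingletonClass μ] [NeZero μ] {S : Set α} (hS : ∀ᵐ t ∂μ, t ∈ S)
    (hpq : ∀ s ∈ S, ∀ t ∈ S, s < t → p s * q t < p t * q s) (hg : StrictAntiOn g S)
    (hp : Integrable p μ) (hq : Integrable q μ)
    (hgp : Integrable (fun t ↦ g t * p t) μ) (hgq : Integrable (fun t ↦ g t * q t) μ) :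
    (∫ t, g t * p t ∂μ) * ∫ t, q t ∂μ < (∫ t, p t ∂μ) * ∫ t, g t * q t ∂μ := by
  set K : α × α → ℝ := fun z ↦ (p z.2 * q z.1 - p z.1 * q z.2) * (g z.1 - g z.2) with hK
  have K_pos : ∀ s ∈ S, ∀ t ∈ S, s ≠ t → 0 < K (s, t) := by
    intro s hs t ht hst
    rcases hst.lt_or_gt with hlt | hgt
    · exact mul_pos (sub_pos.2 (hpq s hs t ht hlt)) (sub_pos.2 (hg hs ht hlt))
    · exact mul_pos_of_neg_of_neg (sub_neg.2 (hpq t ht s hs hgt)) (sub_neg.2 (hg ht hs hgt))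
  have K_nonneg : 0 ≤ᵐ[μ.prod μ] K := by
    filter_upwards [Measure.quasiMeasurePreserving_fst.ae hS,
      Measure.quasiMeasurePreserving_snd.ae hS] with ⟨s, t⟩ hs ht
    rcases eq_or_ne s t with rfl | hst
    · simp [hK]
    · exact (K_pos s hs t ht hst).le
  have K_int : Integrable K (μ.prod μ) := integrable_prod_minor_mul_sub hp hq hgp hgq
  have integral_K_ne_zero : ∫ z, K z ∂μ.prod μ ≠ 0 := by
    intro hzero
    have hae := Measure.ae_ae_of_ae_prod <|
      (integral_eq_zero_iff_of_nonneg_ae K_nonneg K_int).1 hzero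
    obtain ⟨s, hs, hsK⟩ := (hS.and hae).exists
    obtain ⟨t, ht, htK, hts⟩ := (hS.and (hsK.and (Measure.ae_ne μ s))).exists
    exact (K_pos s hs t ht hts.symm).ne' htK
  have integral_K_pos := (integral_nonneg_of_ae K_nonneg).lt_of_ne' integral_K_ne_zero
  rw [integral_prod_minor_mul_sub hp hq hgp hgq] at integral_K_pos
  linarith

end ChebyshevIntegral

section DerivIntegralRpow

variable {α : Type*} [MeasurableSpace α] {μ : Measure α} {w y : α → ℝ} {s : ℝ}

lemma integral_withDensity_ofReal (hw : AEMeasurable w μ) (hw0 : 0 ≤ᵐ[μ] w) (f : α → ℝ) :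
    ∫ t, f t ∂μ.withDensity (fun t ↦ ENNReal.ofReal (w t)) = ∫ t, w t * f t ∂μ := by
  rw [integral_withDensity_eq_integral_toReal_smul₀ hw.ennreal_ofReal (by simp)]
  refine integral_congr_ae ?_
  filter_upwards [hw0] with t ht
  rw [ENNReal.toReal_ofReal ht, smul_eq_mul]

lemma integrable_withDensity_ofReal_iff (hw : AEMeasurable w μ) (hw0 : 0 ≤ᵐ[μ] w) {f : α → ℝ} :
    Integrable f (μ.withDensity fun t ↦ ENNReal.ofReal (w t)) ↔
      Integrable (fun t ↦ w t * f t) μ := by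
  rw [integrable_withDensity_iff_integrable_smul₀' hw.ennreal_ofReal (by simp)]
  refine integrable_congr ?_
  filter_upwards [hw0] with t ht
  rw [ENNReal.toReal_ofReal ht, smul_eq_mul]

lemma mul_exp_mul_log_ae_eq (hy : ∀ᵐ t ∂μ, 0 < y t) (r : ℝ) :
    (fun t ↦ w t * Real.exp (r * Real.log (y t))) =ᵐ[μ] fun t ↦ w t * y t ^ r := by
  filter_upwards [hy] with t ht
  rw [Real.rpow_def_of_pos ht, mul_comm r]

lemma mul_log_mul_exp_mul_log_ae_eq (hy : ∀ᵐ t ∂μ, 0 < y t) (r : ℝ) :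
    (fun t ↦ w t * (Real.log (y t) * Real.exp (r * Real.log (y t)))) =ᵐ[μ]
      fun t ↦ Real.log (y t) * (w t * y t ^ r) := by
  filter_upwards [mul_exp_mul_log_ae_eq hy r] with t ht
  rw [← ht, mul_left_comm]

lemma integrableExpSet_log_withDensity (hw : AEMeasurable w μ) (hw0 : 0 ≤ᵐ[μ] w)
    (hy : ∀ᵐ t ∂μ, 0 < y t) :
    integrableExpSet (fun t ↦ Real.log (y t)) (μ.withDensity fun t ↦ ENNReal.ofReal (w t)) =
      {r | Integrable (fun t ↦ w t * y t ^ r) μ} := by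
  ext r
  exact (integrable_withDensity_ofReal_iff hw hw0).trans
    (integrable_congr (mul_exp_mul_log_ae_eq hy r))

lemma integrable_log_mul_mul_rpow (hw : AEMeasurable w μ) (hw0 : 0 ≤ᵐ[μ] w)
    (hy : ∀ᵐ t ∂μ, 0 < y t) (hs : s ∈ interior {r | Integrable (fun t ↦ w t * y t ^ r) μ}) :
    Integrable (fun t ↦ Real.log (y t) * (w t * y t ^ s)) μ := by
  rw [← integrableExpSet_log_withDensity hw hw0 hy] at hs
  have h := integrable_pow_mul_exp_of_mem_interior_integrableExpSet hs 1
  simp only [pow_one] at h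
  exact ((integrable_withDensity_ofReal_iff hw hw0).1 h).congr
    (mul_log_mul_exp_mul_log_ae_eq hy s)

theorem hasDerivAt_integral_mul_rpow (hw : AEMeasurable w μ) (hw0 : 0 ≤ᵐ[μ] w)
    (hy : ∀ᵐ t ∂μ, 0 < y t) (hs : s ∈ interior {r | Integrable (fun t ↦ w t * y t ^ r) μ}) :
    HasDerivAt (fun r ↦ ∫ t, w t * y t ^ r ∂μ) (∫ t, Real.log (y t) * (w t * y t ^ s) ∂μ) s := by
  rw [← integrableExpSet_log_withDensity hw hw0 hy] at hs
  convert hasDerivAt_mgf hs using 1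
  · ext r
    rw [mgf, integral_withDensity_ofReal hw hw0, integral_congr_ae (mul_exp_mul_log_ae_eq hy r)]
  · rw [integral_withDensity_ofReal hw hw0,
      integral_congr_ae (mul_log_mul_exp_mul_log_ae_eq hy s)]

end DerivIntegralRpow

section BetaIntegral

variable {u v : ℝ}

lemma setIntegral_rpow_mul_one_sub_rpow (hu : 0 < u) (hv : 0 < v) :
    ∫ t in Ioo (0 : ℝ) 1, t ^ (u - 1) * (1 - t) ^ (v - 1) = beta u v := by
  have hB := beta_pos hu hv
  have normalized : ∫ t in Ioo (0 : ℝ) 1, 1 / beta u v * t ^ (u - 1) * (1 - t) ^ (v - 1) = 1 := by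
    rw [integral_eq_lintegral_of_nonneg_ae, ← lintegral_betaPDF, lintegral_betaPDF_eq_one hu hv,
      ENNReal.toReal_one]
    · filter_upwards [ae_restrict_mem measurableSet_Ioo] with t ⟨ht0, ht1⟩
      have := sub_pos.2 ht1
      positivity
    · exact Measurable.aestronglyMeasurable (by fun_prop)
  simp_rw [mul_assoc, integral_const_mul] at normalized
  field_simp at normalized
  exact normalized

lemma integrableOn_rpow_mul_one_sub_rpow (hu : 0 < u) (hv : 0 < v) :
    IntegrableOn (fun t : ℝ ↦ t ^ (u - 1) * (1 - t) ^ (v - 1)) (Ioo 0 1) := by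
  refine .of_integral_ne_zero ?_
  rw [setIntegral_rpow_mul_one_sub_rpow hu hv]
  exact (beta_pos hu hv).ne'

end BetaIntegral

section RisingFactorial

lemma ascPochhammer_eval_eq_risingFactorial (y : ℝ) (n : ℕ) :
    (ascPochhammer ℝ n).eval y = risingFactorial y n := by
  induction n with
  | zero => simp [risingFactorial]
  | succ n ih => rw [ascPochhammer_succ_eval, ih, risingFactorial]

lemma risingFactorial_pos {y : ℝ} (hy : 0 < y) (n : ℕ) : 0 < risingFactorial y n :=
  ascPochhammer_eval_eq_risingFactorial y n ▸ ascPochhammer_pos n y hy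

lemma gamma_add_natCast {y : ℝ} (hy : 0 < y) (n : ℕ) :
    Real.Gamma (y + n) = risingFactorial y n * Real.Gamma y := by
  induction n with
  | zero => simp [risingFactorial]
  | succ n ih =>
    rw [risingFactorial, Nat.cast_succ, ← add_assoc, Real.Gamma_add_one (by positivity), ih]
    ring

lemma beta_add_natCast_left {u v : ℝ} (hu : 0 < u) (hv : 0 < v) (n : ℕ) :
    beta (u + n) v = risingFactorial u n / risingFactorial (u + v) n * beta u v := by
  have := risingFactorial_pos (add_pos hu hv) n
  have := Real.Gamma_pos_of_pos (add_pos hu hv)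
  rw [beta, beta, add_right_comm, gamma_add_natCast hu, gamma_add_natCast (add_pos hu hv)]
  field_simp

lemma setIntegral_pow_mul_rpow_mul_one_sub_rpow {u v : ℝ} (hu : 0 < u) (hv : 0 < v) (n : ℕ) :
    ∫ t in Ioo (0 : ℝ) 1, t ^ n * (t ^ (u - 1) * (1 - t) ^ (v - 1)) =
      risingFactorial u n / risingFactorial (u + v) n * beta u v := by
  rw [← beta_add_natCast_left hu hv, ← setIntegral_rpow_mul_one_sub_rpow (by positivity) hv]
  refine setIntegral_congr_fun measurableSet_Ioo fun t ht ↦ ?_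
  rw [add_sub_right_comm, Real.rpow_add_natCast ht.1.ne']
  ring

lemma ring_choose_add_natCast_sub_one (a : ℝ) (n : ℕ) :
    Ring.choose (a + n - 1) n = risingFactorial a n / n.factorial := by
  have h := Ring.factorial_nsmul_multichoose_eq_ascPochhammer a n
  rw [nsmul_eq_mul, Polynomial.ascPochhammer_smeval_eq_eval,
    ascPochhammer_eval_eq_risingFactorial] at h
  rw [← h, Ring.choose, show a + n - 1 - n + 1 = a by ring, mul_div_cancel_left₀ _ (by positivity)]

lemma hasSum_risingFactorial_div_factorial_mul_pow (a : ℝ) {y : ℝ} (hy : |y| < 1) :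
    HasSum (fun n : ℕ ↦ risingFactorial a n / n.factorial * y ^ n) ((1 - y) ^ (-a)) := by
  have hmem : y ∈ Metric.eball (0 : ℝ) 1 := by
    simpa [← ENNReal.ofReal_one, Metric.eball_ofReal] using hy
  have h := (Real.one_div_one_sub_rpow_hasFPowerSeriesOnBall_zero a).hasSum hmem
  simp only [FormalMultilinearSeries.ofScalars_apply_eq, ring_choose_add_natCast_sub_one, zero_add,
    smul_eq_mul] at h
  rwa [Real.rpow_neg (by linarith [(abs_lt.1 hy).2]), ← one_div]

end RisingFactorial

section EulerIntegral

/-- The integrand of Euler's integral for the hypergeometric function, with the only factor that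
depends on `c` written last. -/
noncomputable def eulerIntegrand (a b c x t : ℝ) : ℝ :=
  t ^ (b - 1) * (1 - x * t) ^ (-a) * (1 - t) ^ (c - b - 1)

/-- Euler's integral, equal to `B(b, c - b) * F(a, b, c, x)` for `0 < b < c` and `|x| < 1`. -/
noncomputable def eulerIntegral (a b c x : ℝ) : ℝ :=
  ∫ t in Ioo (0 : ℝ) 1, eulerIntegrand a b c x t

/-- Euler's integral with an extra factor `log (1 - t)`, the `c`-derivative of `eulerIntegral`. -/
noncomputable def eulerLogIntegral (a b c x : ℝ) : ℝ :=
  ∫ t in Ioo (0 : ℝ) 1, Real.log (1 - t) * eulerIntegrand a b c x t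

variable {a a₁ a₂ b c x t : ℝ}

lemma one_sub_mul_pos (hx : x < 1) (ht : t ∈ Icc (0 : ℝ) 1) : 0 < 1 - x * t := by
  rcases le_total x 0 with h | h
  · linarith [mul_nonpos_of_nonpos_of_nonneg h ht.1]
  · linarith [mul_le_of_le_one_right h ht.2]

lemma eulerIntegrand_pos (hx : x < 1) (ht : t ∈ Ioo (0 : ℝ) 1) : 0 < eulerIntegrand a b c x t := by
  have := ht.1
  have := sub_pos.2 ht.2
  have := one_sub_mul_pos hx (Ioo_subset_Icc_self ht)
  unfold eulerIntegrand
  positivity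

lemma integrableOn_eulerIntegrand (a : ℝ) (hb : 0 < b) (hbc : b < c) (hx : x < 1) :
    IntegrableOn (eulerIntegrand a b c x) (Ioo 0 1) := by
  have hcont : ContinuousOn (fun t : ℝ ↦ (1 - x * t) ^ (-a)) (Icc 0 1) :=
    .rpow_const (by fun_prop) fun t ht ↦ .inl (one_sub_mul_pos hx ht).ne'
  obtain ⟨C, hC⟩ := isCompact_Icc.exists_bound_of_continuousOn hcont
  have hbeta := integrableOn_rpow_mul_one_sub_rpow hb (sub_pos.2 hbc)
  refine (hbeta.mul_bdd (c := C) (Measurable.aestronglyMeasurable (by fun_prop))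
    ?_).congr (.of_forall fun t ↦ mul_right_comm _ _ _)
  filter_upwards [ae_restrict_mem measurableSet_Ioo] with t ht using hC t (Ioo_subset_Icc_self ht)

lemma eulerIntegral_pos (a : ℝ) (hb : 0 < b) (hbc : b < c) (hx : x < 1) :
    0 < eulerIntegral a b c x := by
  have hint := integrableOn_eulerIntegrand a hb hbc hx
  rw [eulerIntegral, ← integral_Ioc_eq_integral_Ioo, ← intervalIntegral.integral_of_le zero_le_one]
  exact intervalIntegral.intervalIntegral_pos_of_pos_on
    ((intervalIntegrable_iff_integrableOn_Ioo_of_le zero_le_one).2 hint)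
    (fun t ht ↦ eulerIntegrand_pos hx ht) one_pos

lemma hasSum_integral_eulerIntegrand (a : ℝ) (hb : 0 < b) (hbc : b < c) (hx : |x| < 1) :
    HasSum (fun n : ℕ ↦ ∫ t in Ioo (0 : ℝ) 1, risingFactorial a n / n.factorial * x ^ n *
      (t ^ n * (t ^ (b - 1) * (1 - t) ^ (c - b - 1)))) (eulerIntegral a b c x) := by
  refine hasSum_integral_of_dominated_convergence (fun n t ↦
    |risingFactorial a n / n.factorial * x ^ n| * (t ^ (b - 1) * (1 - t) ^ (c - b - 1)))
    (fun n ↦ Measurable.aestronglyMeasurable (by fun_prop)) (fun n ↦ ?_)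
    (.of_forall fun t ↦
      (hasSum_risingFactorial_div_factorial_mul_pow a hx).summable.abs.mul_right _) ?_ ?_
  · filter_upwards [ae_restrict_mem measurableSet_Ioo] with t ⟨ht0, ht1⟩
    have := sub_pos.2 ht1
    have hk : 0 ≤ t ^ (b - 1) * (1 - t) ^ (c - b - 1) := by positivity
    rw [Real.norm_eq_abs, abs_mul, abs_of_nonneg (mul_nonneg (pow_nonneg ht0.le n) hk)]
    exact mul_le_mul_of_nonneg_left (mul_le_of_le_one_left hk (pow_le_one₀ ht0.le ht1.le))
      (abs_nonneg _)
  · simp_rw [tsum_mul_right]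
    exact (integrableOn_rpow_mul_one_sub_rpow hb (sub_pos.2 hbc)).const_mul _
  · filter_upwards [ae_restrict_mem measurableSet_Ioo] with t ⟨ht0, ht1⟩
    have hxt : |x * t| < 1 := by
      rw [abs_mul, abs_of_pos ht0]
      exact mul_lt_one_of_nonneg_of_lt_one_left (abs_nonneg x) hx ht1.le
    simpa only [eulerIntegrand, mul_pow, mul_assoc, mul_left_comm, mul_comm] using
      (hasSum_risingFactorial_div_factorial_mul_pow a hxt).mul_right
        (t ^ (b - 1) * (1 - t) ^ (c - b - 1))

theorem hypF_mul_beta_eq_eulerIntegral (a : ℝ) (hb : 0 < b) (hbc : b < c) (hx : |x| < 1) :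
    hypF a b c x * beta b (c - b) = eulerIntegral a b c x := by
  rw [← (hasSum_integral_eulerIntegrand a hb hbc hx).tsum_eq, hypF, ← tsum_mul_right]
  refine tsum_congr fun n ↦ ?_
  rw [integral_const_mul, setIntegral_pow_mul_rpow_mul_one_sub_rpow hb (sub_pos.2 hbc),
    add_sub_cancel]
  have := risingFactorial_pos (hb.trans hbc) n
  field_simp

lemma hypF_div_hypF_eq (a₁ a₂ : ℝ) (hb : 0 < b) (hbc : b < c) (hx : |x| < 1) :
    hypF a₁ b c x / hypF a₂ b c x = eulerIntegral a₁ b c x / eulerIntegral a₂ b c x := by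
  rw [← hypF_mul_beta_eq_eulerIntegral a₁ hb hbc hx, ← hypF_mul_beta_eq_eulerIntegral a₂ hb hbc hx,
    mul_div_mul_right _ _ (beta_pos hb (sub_pos.2 hbc)).ne']

lemma ae_one_sub_pos : ∀ᵐ t ∂volume.restrict (Ioo (0 : ℝ) 1), 0 < 1 - t := by
  filter_upwards [ae_restrict_mem measurableSet_Ioo] with t ht using sub_pos.2 ht.2

lemma rpow_mul_one_sub_mul_rpow_ae_nonneg (a b : ℝ) (hx : x < 1) :
    0 ≤ᵐ[volume.restrict (Ioo (0 : ℝ) 1)] fun t ↦ t ^ (b - 1) * (1 - x * t) ^ (-a) := by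
  filter_upwards [ae_restrict_mem measurableSet_Ioo] with t ht
  exact mul_nonneg (Real.rpow_nonneg ht.1.le _)
    (Real.rpow_nonneg (one_sub_mul_pos hx (Ioo_subset_Icc_self ht)).le _)

lemma mem_interior_setOf_integrableOn (a : ℝ) (hb : 0 < b) (hbc : b < c) (hx : x < 1) :
    c - b - 1 ∈ interior {r | IntegrableOn
      (fun t ↦ t ^ (b - 1) * (1 - x * t) ^ (-a) * (1 - t) ^ r) (Ioo 0 1)} := by
  refine mem_interior.2 ⟨Ioi (-1), fun r hr ↦ ?_, isOpen_Ioi, by simpa using hbc⟩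
  have hbr : b < b + 1 + r := by linarith [mem_Ioi.1 hr]
  have hint := integrableOn_eulerIntegrand a hb hbr hx
  unfold eulerIntegrand at hint
  rwa [show b + 1 + r - b - 1 = r by ring] at hint

lemma integrableOn_log_mul_eulerIntegrand (a : ℝ) (hb : 0 < b) (hbc : b < c) (hx : x < 1) :
    IntegrableOn (fun t ↦ Real.log (1 - t) * eulerIntegrand a b c x t) (Ioo 0 1) :=
  integrable_log_mul_mul_rpow (Measurable.aemeasurable (by fun_prop))
    (rpow_mul_one_sub_mul_rpow_ae_nonneg a b hx) ae_one_sub_pos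
    (mem_interior_setOf_integrableOn a hb hbc hx)

theorem hasDerivAt_eulerIntegral (a : ℝ) (hb : 0 < b) (hbc : b < c) (hx : x < 1) :
    HasDerivAt (fun c' ↦ eulerIntegral a b c' x) (eulerLogIntegral a b c x) c :=
  ((hasDerivAt_integral_mul_rpow (Measurable.aemeasurable (by fun_prop))
    (rpow_mul_one_sub_mul_rpow_ae_nonneg a b hx) ae_one_sub_pos
    (mem_interior_setOf_integrableOn a hb hbc hx)).comp_sub_const (c - b) 1).comp_sub_const c b

lemma rpow_neg_mul_rpow_neg_lt {y z : ℝ} (hy : 0 < y) (hz : 0 < z)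
    (h : 0 < (y - z) * (a₁ - a₂)) :
    y ^ (-a₁) * z ^ (-a₂) < z ^ (-a₁) * y ^ (-a₂) := by
  have hlog : 0 < (Real.log y - Real.log z) * (a₁ - a₂) := by
    rcases mul_pos_iff.1 h with ⟨hyz, ha⟩ | ⟨hyz, ha⟩
    · exact mul_pos (sub_pos.2 (Real.log_lt_log hz (sub_pos.1 hyz))) ha
    · exact mul_pos_of_neg_of_neg (sub_neg.2 (Real.log_lt_log hy (sub_neg.1 hyz))) ha
  simp only [Real.rpow_def_of_pos hy, Real.rpow_def_of_pos hz, ← Real.exp_add, Real.exp_lt_exp]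
  linarith

lemma eulerIntegrand_mul_lt (hx : x < 1) (ha : 0 < x * (a₁ - a₂)) {s t : ℝ}
    (hs : s ∈ Ioo (0 : ℝ) 1) (ht : t ∈ Ioo (0 : ℝ) 1) (hst : s < t) :
    eulerIntegrand a₁ b c x s * eulerIntegrand a₂ b c x t <
      eulerIntegrand a₁ b c x t * eulerIntegrand a₂ b c x s := by
  have hrpow := rpow_neg_mul_rpow_neg_lt (a₁ := a₁) (a₂ := a₂)
    (one_sub_mul_pos hx (Ioo_subset_Icc_self hs)) (one_sub_mul_pos hx (Ioo_subset_Icc_self ht))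
    (by linarith [mul_pos (sub_pos.2 hst) ha])
  have hweight : 0 < s ^ (b - 1) * (1 - s) ^ (c - b - 1) *
      (t ^ (b - 1) * (1 - t) ^ (c - b - 1)) := by
    have := hs.1
    have := ht.1
    have := sub_pos.2 hs.2
    have := sub_pos.2 ht.2
    positivity
  unfold eulerIntegrand
  linarith [mul_lt_mul_of_pos_left hrpow hweight]

lemma strictAntiOn_log_one_sub : StrictAntiOn (fun t : ℝ ↦ Real.log (1 - t)) (Iio 1) :=
  fun _ _ _ ht hst ↦ Real.log_lt_log (sub_pos.2 ht) (sub_lt_sub_left hst 1)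

theorem eulerLogIntegral_mul_eulerIntegral_lt (hb : 0 < b) (hbc : b < c) (hx : x < 1)
    (ha : 0 < x * (a₁ - a₂)) :
    eulerLogIntegral a₁ b c x * eulerIntegral a₂ b c x <
      eulerIntegral a₁ b c x * eulerLogIntegral a₂ b c x := by
  have : NeZero (volume.restrict (Ioo (0 : ℝ) 1)) := ⟨by simp⟩
  exact integral_mul_mul_integral_lt_of_strictAntiOn (ae_restrict_mem measurableSet_Ioo)
    (fun _ hs _ ht hst ↦ eulerIntegrand_mul_lt hx ha hs ht hst)
    (strictAntiOn_log_one_sub.mono Ioo_subset_Iio_self)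
    (integrableOn_eulerIntegrand a₁ hb hbc hx) (integrableOn_eulerIntegrand a₂ hb hbc hx)
    (integrableOn_log_mul_eulerIntegrand a₁ hb hbc hx)
    (integrableOn_log_mul_eulerIntegrand a₂ hb hbc hx)

lemma eulerIntegrand_eq_of_mul_sub_eq_zero (h : x * (a₂ - a₁) = 0) :
    eulerIntegrand a₁ b c x = eulerIntegrand a₂ b c x := by
  rcases mul_eq_zero.1 h with rfl | ha
  · simp [funext_iff, eulerIntegrand]
  · rw [sub_eq_zero.1 ha]

theorem sign_eulerIntegral_wronskian (hb : 0 < b) (hbc : b < c) (hx : x < 1) :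
    Real.sign (eulerLogIntegral a₁ b c x * eulerIntegral a₂ b c x -
      eulerIntegral a₁ b c x * eulerLogIntegral a₂ b c x) = Real.sign (x * (a₂ - a₁)) := by
  rcases lt_trichotomy (x * (a₂ - a₁)) 0 with hneg | hzero | hpos
  · have hlt := eulerLogIntegral_mul_eulerIntegral_lt (a₁ := a₁) (a₂ := a₂) hb hbc hx (by linarith)
    rw [Real.sign_of_neg hneg, Real.sign_of_neg (sub_neg.2 hlt)]
  · simp only [hzero, eulerLogIntegral, eulerIntegral, eulerIntegrand_eq_of_mul_sub_eq_zero hzero,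
      mul_comm, sub_self]
  · have hlt := eulerLogIntegral_mul_eulerIntegral_lt (a₁ := a₂) (a₂ := a₁) hb hbc hx hpos
    rw [Real.sign_of_pos hpos, Real.sign_of_pos (by linarith)]

end EulerIntegral

lemma real_sign_mul_of_pos {r : ℝ} (hr : 0 < r) (s : ℝ) : Real.sign (r * s) = Real.sign s := by
  simp [Real.sign, mul_neg_iff, hr, hr.not_gt]

theorem stmt14_general (a₁ a₂ b c x : ℝ) (hb : 0 < b) (hbc : b < c) (hx : |x| < 1) :
    Real.sign (deriv (fun c' : ℝ ↦ hypF a₁ b c' x / hypF a₂ b c' x) c) =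
      Real.sign (x * (a₂ - a₁)) := by
  have hx1 : x < 1 := (abs_lt.1 hx).2
  have ratio_eq : (fun c' ↦ hypF a₁ b c' x / hypF a₂ b c' x) =ᶠ[nhds c]
      fun c' ↦ eulerIntegral a₁ b c' x / eulerIntegral a₂ b c' x := by
    filter_upwards [Ioi_mem_nhds hbc] with c' hc' using hypF_div_hypF_eq a₁ a₂ hb hc' hx
  have hpos := eulerIntegral_pos a₂ hb hbc hx1
  have hderiv := (hasDerivAt_eulerIntegral a₁ hb hbc hx1).fun_div
    (hasDerivAt_eulerIntegral a₂ hb hbc hx1) hpos.ne'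
  rw [ratio_eq.deriv_eq, hderiv.deriv, div_eq_inv_mul,
    real_sign_mul_of_pos (inv_pos.2 (pow_pos hpos 2)), sign_eulerIntegral_wronskian hb hbc hx1]

/-- For `c > b > 0` and `0 < x < 1`,
`sgn(D_c (F(a₁,b,c,x)/F(a₂,b,c,x))) = sgn(a₂ - a₁)`. -/
theorem stmt14 (a₁ a₂ b c x : ℝ) (hb : 0 < b) (hbc : b < c)
    (hx : x ∈ Set.Ioo (0 : ℝ) 1) :
    Real.sign (deriv (fun c' : ℝ => hypF a₁ b c' x / hypF a₂ b c' x) c) =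
      Real.sign (a₂ - a₁) := by
  rw [stmt14_general a₁ a₂ b c x hb hbc (abs_lt.2 ⟨by linarith [hx.1], hx.2⟩),
    real_sign_mul_of_pos hx.1]
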